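/- Let Q ⊂ ℝ³ be an axis-parallel cube of sidelength s > 0. For each k ∈ ℕ let 𝒟_k be a finite collection of axis-parallel cubes of sidelength t_k > 0, and suppose that Σ_k #(𝒟_k) · (400·t_k/s) < 1/2. Then there exists a real number r with 1/2 < r < 1 such that for every k and every Q′ ∈ 𝒟_k, 100Q′ ∩ ∂(rQ) = ∅. -/

import Mathlib

open Set

/-- The axis-parallel cube in `ℝ³` with center `c` and sidelength `s`:
`{x : ‖x - c‖_∞ ≤ s/2}` (the norm on `Fin 3 → ℝ` is the sup norm).
The dilate `rQ` of `Q = cube3 c s` is `cube3 c (r*s)`, and `∂(rQ)` is its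
topological frontier. -/
def cube3 (c : Fin 3 → ℝ) (s : ℝ) : Set (Fin 3 → ℝ) := {x | ‖x - c‖ ≤ s / 2}

/-!
If `closedBall c ρ` meets the sphere of radius `r * s` about `q`, then `r` lies within `ρ / s` of
`dist c q / s`. So each ball excludes an interval of dilation factors of length `2 * ρ / s`, and
countably many intervals of total length less than `b - a` cannot cover `Ioo a b`.
-/

open MeasureTheory Metric
open scoped ENNReal

theorem exists_mem_forall_notMem_of_tsum_measure_lt {α ι : Type*} [MeasurableSpace α]
    [Countable ι] {μ : Measure α} {S : Set α} {A : ι → Set α} (h : ∑' i, μ (A i) < μ S) :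
    ∃ x ∈ S, ∀ i, x ∉ A i := by
  by_contra! hcover
  have hsub : S ⊆ ⋃ i, A i := fun x hx => mem_iUnion.mpr (hcover x hx)
  exact h.not_ge ((measure_mono hsub).trans (measure_iUnion_le A))

theorem tsum_sigma_coe_eq_tsum_ncard_mul {α κ : Type*} {D : κ → Set α} (hD : ∀ k, (D k).Finite)
    (f : κ → ℝ≥0∞) :
    ∑' i : (Σ k, D k), f i.1 = ∑' k, ((D k).ncard : ℝ≥0∞) * f k := by
  rw [ENNReal.tsum_sigma']
  refine tsum_congr fun k => ?_
  refine (ENNReal.tsum_const (f k)).trans ?_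
  rw [ENat.card_coe_set_eq, ← (hD k).cast_ncard_eq, ENat.toENNReal_coe]

section Spheres

variable {X : Type*} [PseudoMetricSpace X] {s : ℝ}

theorem mem_closedBall_dist_div_of_mem_closedBall_of_mem_sphere {c q x : X} {r ρ : ℝ} (hs : 0 < s)
    (hc : x ∈ closedBall c ρ) (hq : x ∈ sphere q (r * s)) :
    r ∈ closedBall (dist c q / s) (ρ / s) := by
  rw [mem_closedBall, Real.dist_eq]
  calc |r - dist c q / s| = |(dist x q - dist c q) / s| := by
        rw [mem_sphere.mp hq, sub_div, mul_div_cancel_right₀ r hs.ne']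
    _ = |dist x q - dist c q| / s := by rw [abs_div, abs_of_pos hs]
    _ ≤ dist x c / s := by gcongr; exact abs_dist_sub_le x c q
    _ ≤ ρ / s := by gcongr; exact hc

theorem exists_mem_Ioo_forall_disjoint_closedBall_sphere {ι : Type*} [Countable ι] {a b : ℝ}
    (q : X) (hs : 0 < s) (c : ι → X) (ρ : ι → ℝ)
    (h : ∑' i, ENNReal.ofReal (2 * (ρ i / s)) < ENNReal.ofReal (b - a)) :
    ∃ r ∈ Ioo a b, ∀ i, Disjoint (closedBall (c i) (ρ i)) (sphere q (r * s)) := by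
  have hvol : ∑' i, volume (closedBall (dist (c i) q / s) (ρ i / s)) < volume (Ioo a b) := by
    simpa only [Real.volume_closedBall, Real.volume_Ioo] using h
  obtain ⟨r, hr, hgood⟩ := exists_mem_forall_notMem_of_tsum_measure_lt hvol
  exact ⟨r, hr, fun i => disjoint_left.mpr fun x hc hq =>
    hgood i (mem_closedBall_dist_div_of_mem_closedBall_of_mem_sphere hs hc hq)⟩

theorem stmt9_general {κ : Type*} [Countable κ] (q : X) (hs : 0 < s) {D : κ → Set X}
    {t : κ → ℝ} (hD : ∀ k, (D k).Finite)
    (hsum : ∑' k, ((D k).ncard : ℝ≥0∞) * ENNReal.ofReal (200 * t k / s) < 1 / 2) :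
    ∃ r : ℝ, 1 / 2 < r ∧ r < 1 ∧ ∀ k, ∀ c ∈ D k,
      closedBall c (100 * t k / 2) ∩ frontier (closedBall q (r * s / 2)) = ∅ := by
  have (k : κ) : Countable (D k) := (hD k).countable.to_subtype
  have hhalf : ENNReal.ofReal (1 - 1 / 2) = 1 / 2 := by
    rw [sub_half, ENNReal.ofReal_div_of_pos two_pos, ENNReal.ofReal_one, ENNReal.ofReal_ofNat]
  have hradii (k : κ) : 200 * t k / s = 2 * (100 * t k / 2 / (s / 2)) := by
    field_simp
    ring
  simp_rw [hradii] at hsum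
  rw [← tsum_sigma_coe_eq_tsum_ncard_mul hD, ← hhalf] at hsum
  obtain ⟨r, ⟨hr₁, hr₂⟩, hdisj⟩ := exists_mem_Ioo_forall_disjoint_closedBall_sphere q
    (half_pos hs) (fun i : Σ k, D k => (i.2 : X)) (fun i => 100 * t i.1 / 2) hsum
  refine ⟨r, hr₁, hr₂, fun k c hc => disjoint_iff_inter_eq_empty.mp ?_⟩
  rw [mul_div_assoc r]
  exact (hdisj ⟨k, c, hc⟩).mono_right frontier_closedBall_subset_sphere

end Spheres

theorem cube3_eq_closedBall (c : Fin 3 → ℝ) (s : ℝ) : cube3 c s = closedBall c (s / 2) := by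
  ext x
  exact mem_closedBall_iff_norm.symm

/-- let `Q` be a cube of sidelength `s > 0` (center `q`), and for each `k` let
`D k` be a finite collection of cubes of sidelength `t k > 0` (recorded by their centers).
If `Σ_k #(D k)·(400·t_k/s) < 1/2`, then there is `1/2 < r < 1` such that
`100Q′ ∩ ∂(rQ) = ∅` for every `k` and every `Q′ ∈ D k`. -/
theorem stmt9 (q : Fin 3 → ℝ) (s : ℝ) (hs : 0 < s)
    (D : ℕ → Set (Fin 3 → ℝ)) (t : ℕ → ℝ)
    (hD : ∀ k, (D k).Finite) (ht : ∀ k, 0 < t k)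
    (hsum : ∑' k, ((D k).ncard : ENNReal) * ENNReal.ofReal (400 * t k / s) < 1 / 2) :
    ∃ r : ℝ, 1 / 2 < r ∧ r < 1 ∧
      ∀ k, ∀ c ∈ D k, cube3 c (100 * t k) ∩ frontier (cube3 q (r * s)) = ∅ := by
  simp only [cube3_eq_closedBall]
  exact stmt9_general q hs hD
    ((ENNReal.tsum_le_tsum fun k => by have := ht k; gcongr; norm_num).trans_lt hsum)
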